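/- Fix a model-state pair M,Γ and let i be the object constant identifying Γ in Sta (i.e. I(i) = (v*I)(↓id,Γ)). Let a be an object constant and ↓c a relativized concept term with 𝔠(c)=k. Then (v*I)(a,Γ) = (v*I)(↓c,Γ) if and only if ⟨i⟩ ∈ π₁ σ_{'a'=k}(Sta)(I_M), equivalently, iff there is a tuple t ∈ Sta(I_M) with t(1)=i and t(k)=a. -/

import Mathlib

namespace KripkeDB

/-- Variable kinds: object variables and concept variables. -/
inductive VKind : Type
  | obj : VKind
  | con : VKind

/-- A first-order modal model: an augmented frame `⟨G, {R_π}, D_o, D_c⟩` together with an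
interpretation `I`.  `State` is the nonempty set of states, `acc r` is the accessibility
relation `R_r` for each relation symbol `r : RelSym`, `Obj` is the nonempty object domain
`D_o`, and the `m` individual concepts (functions from states to objects, `m = |D_c|`)
are indexed by `Fin m` via the bijection `𝔠` (0-based: the concept indexed by `i` has
`𝔠`-value `i+1`).  The concept indexed by `0` is the distinguished concept `id`
(so `𝔠(id) = 1`), whose value uniquely identifies each state.  By the unique names
assumption, constants are identified with the objects/concepts they denote. -/
structure Model where
  State : Type
  state_ne : Nonempty State
  Obj : Type
  obj_ne : Nonempty Obj
  RelSym : Type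
  acc : RelSym → State → State → Prop
  m : ℕ
  m_pos : 0 < m
  concept : Fin m → State → Obj
  id_inj : ∀ Γ Δ : State, concept ⟨0, m_pos⟩ Γ = concept ⟨0, m_pos⟩ Δ → Γ = Δ

/-- Database values: the domain **dom** = D_o ∪ D_c ∪ Π consists of objects,
concept names and accessibility-relation names. -/
abbrev V (M : Model) : Type := M.Obj ⊕ (Fin M.m ⊕ M.RelSym)

/-- The id-value of a state: `(v*I)(↓id, Γ)`. -/
def idval (M : Model) (Γ : M.State) : M.Obj := M.concept ⟨0, M.m_pos⟩ Γ

/-- A relation instance: a set of tuples over the database domain. -/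
abbrev Inst (M : Model) : Type := Set (List (V M))

noncomputable def deflt (M : Model) : V M := Sum.inl (Classical.choice M.obj_ne)

/-- 1-based attribute access `t(j)`. -/
noncomputable def att (M : Model) (t : List (V M)) (j : ℕ) : V M := t.getD (j - 1) (deflt M)

/-- Projection `π_{j₁,…,jₚ}`. -/
noncomputable def proj (M : Model) (js : List ℕ) (I : Inst M) : Inst M :=
  { u | ∃ t ∈ I, u = js.map (att M t) }

/-- Selection `σ_{j=k}` (attribute `j` equals attribute `k`). -/
noncomputable def selEq (M : Model) (j k : ℕ) (I : Inst M) : Inst M :=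
  { t | t ∈ I ∧ att M t j = att M t k }

/-- Selection `σ_{j=c}` (attribute `j` equals the constant `c`). -/
noncomputable def selC (M : Model) (j : ℕ) (c : V M) (I : Inst M) : Inst M :=
  { t | t ∈ I ∧ att M t j = c }

/-- Cross product `I × J`. -/
def cprod (M : Model) (I J : Inst M) : Inst M :=
  { l | ∃ t ∈ I, ∃ u ∈ J, l = t ++ u }

/-- The `Sta`-tuple of a state `Γ`: its `i`-th entry is the value at `Γ` of the concept
with `𝔠`-value `i`. -/
def staTuple (M : Model) (Γ : M.State) : List (V M) :=
  List.ofFn (fun i : Fin M.m => Sum.inl (M.concept i Γ))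

/-- The instance of the relation `Sta` in the database instance `I_M` associated with `M`. -/
def Sta (M : Model) : Inst M := { l | ∃ Γ : M.State, l = staTuple M Γ }

/-- The instance of the unary relation `Obj` (instance `D_o`) in `I_M`. -/
def ObjI (M : Model) : Inst M := { l | ∃ o : M.Obj, l = [Sum.inl o] }

/-- The instance of the unary relation `Con` (instance `D_c`) in `I_M`. -/
def ConI (M : Model) : Inst M := { l | ∃ c : Fin M.m, l = [Sum.inr (Sum.inl c)] }

/-- The instance of the ternary relation `Rel` in `I_M`: it contains `⟨a,b,π⟩` iff
`R_π(Γ,Δ)` where `a,b` are the id-values of `Γ,Δ`. -/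
def RelI (M : Model) : Inst M :=
  { l | ∃ (r : M.RelSym) (Γ Δ : M.State), M.acc r Γ Δ ∧
      l = [Sum.inl (idval M Γ), Sum.inl (idval M Δ), Sum.inr (Sum.inr r)] }

/-- Membership of a database value in the domain of a variable kind
(`D_o` for object variables, `D_c` for concept variables). -/
def kindOk (M : Model) : VKind → V M → Prop
  | VKind.obj, x => ∃ o : M.Obj, x = Sum.inl o
  | VKind.con, x => ∃ c : Fin M.m, x = Sum.inr (Sum.inl c)

/-- `VT(ϱ₁,…,ϱₙ)`: the cross product `D₁ × … × Dₙ` of the domain relations, where `Dᵢ`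
is `Con` for a concept variable and `Obj` for an object variable
(for the empty list this is `{⟨⟩}`). -/
def VTl (M : Model) (ks : List VKind) : Inst M :=
  { l | List.Forall₂ (kindOk M) ks l }

/-- Object terms: object constants (identified with objects via unique names),
object variables (de Bruijn index `k` denotes the variable `ϱ_{k+1}`), and
relativized concept terms `↓c` for a concept constant `c`. -/
inductive OTm (M : Model) : Type
  | const : M.Obj → OTm M
  | var : ℕ → OTm M
  | down : Fin M.m → OTm M

/-- Term evaluation `(v*I)(·, Γ)`. -/
def teval (M : Model) (v : ℕ → V M) (Γ : M.State) : OTm M → V M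
  | OTm.const o => Sum.inl o
  | OTm.var k => v k
  | OTm.down c => Sum.inl (M.concept c Γ)

/-- The result of the term translation `TT`: an attribute index or a constant. -/
inductive TTRes (M : Model) : Type
  | idx : ℕ → TTRes M
  | con : V M → TTRes M

/-- The term translation `TT` with `n` variables in scope: `TT(c) = 'c'` for an object
constant, `TT(ϱ_k) = k`, and `TT(↓t) = n + 𝔠(t)` for a relativized term. -/
def TT (M : Model) (n : ℕ) : OTm M → TTRes M
  | OTm.const o => TTRes.con (Sum.inl o)
  | OTm.var k => TTRes.idx (k + 1)
  | OTm.down c => TTRes.idx (n + (c.val + 1))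

/-- The value in tuple `t` designated by a `TT`-result. -/
noncomputable def ttval (M : Model) (t : List (V M)) : TTRes M → V M
  | TTRes.idx j => att M t j
  | TTRes.con c => c

/-- Generalized selection `σ_{a=b}` where each side is an attribute index or a constant. -/
noncomputable def selT (M : Model) (a b : TTRes M) (I : Inst M) : Inst M :=
  { t | t ∈ I ∧ ttval M t a = ttval M t b }

/-- Generalized selection `σ_{a≠b}`. -/
noncomputable def selTne (M : Model) (a b : TTRes M) (I : Inst M) : Inst M :=
  { t | t ∈ I ∧ ttval M t a ≠ ttval M t b }

/-- The set of (indices of) variables occurring in a term. -/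
def tvars (M : Model) : OTm M → Set ℕ
  | OTm.var k => {k}
  | _ => ∅

/-- Formulas of the modal language.  Binders (`ex`, `all`, `lam`) bind the de Bruijn
variable `0`; in `⟨λϱ.φ⟩(↓c)` the abstracted variable is an object variable and the
argument term is the relativized concept term `↓c`. -/
inductive Fma (M : Model) : Type
  | eq : OTm M → OTm M → Fma M
  | ne : OTm M → OTm M → Fma M
  | not : Fma M → Fma M
  | and : Fma M → Fma M → Fma M
  | or : Fma M → Fma M → Fma M
  | dia : M.RelSym → Fma M → Fma M
  | box : M.RelSym → Fma M → Fma M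
  | ex : VKind → Fma M → Fma M
  | all : VKind → Fma M → Fma M
  | lam : Fin M.m → Fma M → Fma M

/-- Extending an assignment with a value for the freshly bound variable. -/
def consA (M : Model) (d : V M) (v : ℕ → V M) : ℕ → V M
  | 0 => d
  | k + 1 => v k

/-- Truth in a model: `M,Γ ⊩_v φ`. -/
def Truth (M : Model) : M.State → (ℕ → V M) → Fma M → Prop
  | Γ, v, Fma.eq t₁ t₂ => teval M v Γ t₁ = teval M v Γ t₂
  | Γ, v, Fma.ne t₁ t₂ => teval M v Γ t₁ ≠ teval M v Γ t₂
  | Γ, v, Fma.not φ => ¬ Truth M Γ v φ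
  | Γ, v, Fma.and φ ψ => Truth M Γ v φ ∧ Truth M Γ v ψ
  | Γ, v, Fma.or φ ψ => Truth M Γ v φ ∨ Truth M Γ v ψ
  | Γ, v, Fma.dia r φ => ∃ Δ : M.State, M.acc r Γ Δ ∧ Truth M Δ v φ
  | Γ, v, Fma.box r φ => ∀ Δ : M.State, M.acc r Γ Δ → Truth M Δ v φ
  | Γ, v, Fma.ex k φ => ∃ d : V M, kindOk M k d ∧ Truth M Γ (consA M d v) φ
  | Γ, v, Fma.all k φ => ∀ d : V M, kindOk M k d → Truth M Γ (consA M d v) φ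
  | Γ, v, Fma.lam c φ => Truth M Γ (consA M (Sum.inl (M.concept c Γ)) v) φ

/-- The translation `FT` of modal queries into relational algebra queries, evaluated on
`I_M`.  `ks` is the list of kinds of the free variables `ϱ₁,…,ϱₙ` (so `n = ks.length`).
The box clause is `FT([π]φ) = FT(¬⟨π⟩¬φ)`, written out. -/
noncomputable def FT (M : Model) : List VKind → Fma M → Inst M
  | ks, Fma.eq t₁ t₂ =>
      proj M (List.range' 1 (ks.length + 1))
        (selT M (TT M ks.length t₁) (TT M ks.length t₂) (cprod M (VTl M ks) (Sta M)))
  | ks, Fma.ne t₁ t₂ =>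
      proj M (List.range' 1 (ks.length + 1))
        (selTne M (TT M ks.length t₁) (TT M ks.length t₂) (cprod M (VTl M ks) (Sta M)))
  | ks, Fma.not φ =>
      cprod M (VTl M ks) (proj M [1] (Sta M)) \ FT M ks φ
  | ks, Fma.and φ ψ => FT M ks φ ∩ FT M ks ψ
  | ks, Fma.or φ ψ => FT M ks φ ∪ FT M ks ψ
  | ks, Fma.dia r φ =>
      proj M (List.range' 1 ks.length ++ [ks.length + 2])
        (selC M (ks.length + 4) (Sum.inr (Sum.inr r))
          (selEq M (ks.length + 1) (ks.length + 3) (cprod M (FT M ks φ) (RelI M))))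
  | ks, Fma.box r φ =>
      cprod M (VTl M ks) (proj M [1] (Sta M)) \
        proj M (List.range' 1 ks.length ++ [ks.length + 2])
          (selC M (ks.length + 4) (Sum.inr (Sum.inr r))
            (selEq M (ks.length + 1) (ks.length + 3)
              (cprod M (cprod M (VTl M ks) (proj M [1] (Sta M)) \ FT M ks φ) (RelI M))))
  | ks, Fma.ex k φ =>
      proj M (List.range' 2 (ks.length + 1)) (FT M (k :: ks) φ)
  | ks, Fma.all k φ =>
      proj M (List.range' 2 (ks.length + 1)) (FT M (k :: ks) φ) \
        proj M (List.range' 2 (ks.length + 1))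
          (cprod M (VTl M [k]) (proj M (List.range' 2 (ks.length + 1)) (FT M (k :: ks) φ)) \
            FT M (k :: ks) φ)
  | ks, Fma.lam c φ =>
      proj M (List.range' 2 (ks.length + 1))
        (selEq M 1 (ks.length + 3)
          (selEq M (ks.length + 2) (ks.length + 4)
            (cprod M (FT M (VKind.obj :: ks) φ) (proj M [c.val + 1, 1] (Sta M)))))

/-- Well-formedness of a term in a context of variable kinds. -/
def WFt (M : Model) (ks : List VKind) : OTm M → Prop
  | OTm.const _ => True
  | OTm.var k => ks[k]? = some VKind.obj
  | OTm.down _ => True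

/-- Well-formedness of a formula in a context of variable kinds: a modal query
`φ(ϱ₁,…,ϱₙ)` is a well-formed formula whose free variables are among `ϱ₁,…,ϱₙ`. -/
def WF (M : Model) : List VKind → Fma M → Prop
  | ks, Fma.eq t₁ t₂ => WFt M ks t₁ ∧ WFt M ks t₂
  | ks, Fma.ne t₁ t₂ => WFt M ks t₁ ∧ WFt M ks t₂
  | ks, Fma.not φ => WF M ks φ
  | ks, Fma.and φ ψ => WF M ks φ ∧ WF M ks ψ
  | ks, Fma.or φ ψ => WF M ks φ ∧ WF M ks ψ
  | ks, Fma.dia _ φ => WF M ks φ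
  | ks, Fma.box _ φ => WF M ks φ
  | ks, Fma.ex k φ => WF M (k :: ks) φ
  | ks, Fma.all k φ => WF M (k :: ks) φ
  | ks, Fma.lam _ φ => WF M (VKind.obj :: ks) φ

/-- An assignment conforms to a context of kinds if it maps object variables into `D_o`
and concept variables into `D_c`. -/
def Conf (M : Model) (ks : List VKind) (v : ℕ → V M) : Prop :=
  ∀ k : Fin ks.length, kindOk M (ks.get k) (v k)

section

variable {M : Model}

theorem idval_injective : Function.Injective (idval M) := M.id_inj

theorem att_staTuple (Γ : M.State) (c : Fin M.m) :
    att M (staTuple M Γ) (c.val + 1) = Sum.inl (M.concept c Γ) := by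
  simp [att, staTuple]

theorem att_staTuple_one (Γ : M.State) : att M (staTuple M Γ) 1 = Sum.inl (idval M Γ) :=
  att_staTuple Γ ⟨0, M.m_pos⟩

theorem eq_staTuple_of_att_one_eq_idval {t : List (V M)} {Γ : M.State} (ht : t ∈ Sta M)
    (h : att M t 1 = Sum.inl (idval M Γ)) : t = staTuple M Γ := by
  obtain ⟨Δ, rfl⟩ := ht
  rw [att_staTuple_one] at h
  rw [idval_injective (Sum.inl_injective h)]

theorem exists_mem_sta_att_one_eq_idval_and (Γ : M.State) (P : List (V M) → Prop) :
    (∃ t ∈ Sta M, att M t 1 = Sum.inl (idval M Γ) ∧ P t) ↔ P (staTuple M Γ) := by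
  constructor
  · rintro ⟨t, ht, hid, hP⟩
    rwa [← eq_staTuple_of_att_one_eq_idval ht hid]
  · exact fun hP => ⟨staTuple M Γ, ⟨Γ, rfl⟩, att_staTuple_one Γ, hP⟩

theorem singleton_mem_proj_selT {x : V M} {j : ℕ} {a b : TTRes M} {I : Inst M} :
    [x] ∈ proj M [j] (selT M a b I) ↔
      ∃ t ∈ I, att M t j = x ∧ ttval M t a = ttval M t b := by
  simp only [proj, selT, Set.mem_ofPred_eq, List.map_cons, List.map_nil, List.cons.injEq,
    and_true, and_assoc, eq_comm (a := x), and_comm (a := ttval M _ a = ttval M _ b)]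

theorem singleton_idval_mem_proj_selT_sta (Γ : M.State) (a b : TTRes M) :
    [Sum.inl (idval M Γ)] ∈ proj M [1] (selT M a b (Sta M)) ↔
      ttval M (staTuple M Γ) a = ttval M (staTuple M Γ) b :=
  singleton_mem_proj_selT.trans (exists_mem_sta_att_one_eq_idval_and Γ _)

end

/-- Fix a model-state pair `M,Γ` and let `i` be the object constant
identifying `Γ` in `Sta` (`I(i) = (v*I)(↓id,Γ)`).  Let `a` be an object constant and
`↓c` a relativized concept term with `𝔠(c) = k`.  Then `(v*I)(a,Γ) = (v*I)(↓c,Γ)` iff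
`⟨i⟩ ∈ π₁ σ_{'a'=k}(Sta)(I_M)`, equivalently, iff there is a tuple `t ∈ Sta(I_M)` with
`t(1) = i` and `t(k) = a`. -/
theorem const_relativized_case (M : Model) (Γ : M.State) (a : M.Obj) (c : Fin M.m)
    (k : ℕ) (hk : k = c.val + 1) (v : ℕ → V M) (i : M.Obj) (hi : i = idval M Γ) :
    (teval M v Γ (OTm.const a) = teval M v Γ (OTm.down c) ↔
      ([Sum.inl i] : List (V M)) ∈
        proj M [1] (selT M (TTRes.con (Sum.inl a)) (TTRes.idx k) (Sta M)))
    ∧ (teval M v Γ (OTm.const a) = teval M v Γ (OTm.down c) ↔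
      ∃ t ∈ Sta M, att M t 1 = (Sum.inl i : V M) ∧ att M t k = (Sum.inl a : V M)) := by
  subst hk hi
  constructor
  · rw [singleton_idval_mem_proj_selT_sta]
    simp only [teval, ttval, att_staTuple]
  · rw [exists_mem_sta_att_one_eq_idval_and Γ fun t => att M t (c.val + 1) = Sum.inl a,
      att_staTuple]
    exact eq_comm

end KripkeDB
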